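/- Suppose 𝒬 = conv{0, e₁, …, e_N, k·𝟙}, where e₁,…,e_N is the standard basis of ℝ^N, 𝟙 = (1,…,1), and k > 0. Then for any optimal feasible price schedule p: (1) if 1/N ≤ k < 1, then each of the bundles e₁, …, e_N is pooling, i.e., each D(e_n) has positive measure under f(x)dx; (2) if k > 1/N, then the bundle k·𝟙 is pooling, i.e., D(k·𝟙) has positive measure under f(x)dx. -/

import Mathlib

open MeasureTheory Set

noncomputable section

namespace Stmt14

variable {N : ℕ}

/-- Dot product on `ℝ^N`. -/
def dot (x q : Fin N → ℝ) : ℝ := ∑ n, x n * q n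

/-- The box `[a,b]^N`. -/
def box (a b : ℝ) : Set (Fin N → ℝ) := Icc (fun _ => a) (fun _ => b)

/-- `φ(x) = x·∇f(x) + (N+1)·f(x)`. -/
def phi (f : (Fin N → ℝ) → ℝ) (x : Fin N → ℝ) : ℝ :=
  (∑ n, x n * fderiv ℝ f x (Pi.single n 1)) + (N + 1) * f x

/-- The boundary integral `∫_{[x̲,x̄]^{N−1}} 1_A(ι_n^c(y)) f(ι_n^c(y)) dy`, written as an
integral over the full box divided by the length of the redundant coordinate. -/
def bInt (xl xu : ℝ) (f : (Fin N → ℝ) → ℝ) (n : Fin N) (c : ℝ) (A : Set (Fin N → ℝ)) : ℝ :=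
  (xu - xl)⁻¹ *
    ∫ y in box xl xu, A.indicator f (Function.update y n c)

/-- The transformed measure `μ` of the type distribution, as a set function:
`μ(A) = Σₙ (x̄·∫ 1_A(ι_n^{x̄}) f − x̲·∫ 1_A(ι_n^{x̲}) f) − ∫_{A} φ`. -/
def mu (xl xu : ℝ) (f : (Fin N → ℝ) → ℝ) (A : Set (Fin N → ℝ)) : ℝ :=
  (∑ n, (xu * bInt xl xu f n xu A - xl * bInt xl xu f n xl A)) -
    ∫ x in A ∩ box xl xu, phi f x

/-- The indirect utility `u_p(x) = sup_{q ∈ Q} (x·q − p(q))`. -/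
def indirect (Q : Set (Fin N → ℝ)) (p : (Fin N → ℝ) → ℝ) (x : Fin N → ℝ) : ℝ :=
  sSup ((fun q => dot x q - p q) '' Q)

/-- The lower convex envelope `p̄(q) = sup_{x ∈ X} (x·q − u_p(x))`. -/
def envelope (X Q : Set (Fin N → ℝ)) (p : (Fin N → ℝ) → ℝ) (q : Fin N → ℝ) : ℝ :=
  sSup ((fun x => dot x q - indirect Q p x) '' X)

/-- The demand set of a bundle `q`. -/
def demandSet (X Q : Set (Fin N → ℝ)) (p : (Fin N → ℝ) → ℝ) (q : Fin N → ℝ) :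
    Set (Fin N → ℝ) :=
  {x ∈ X | ∀ q' ∈ Q, dot x q' - envelope X Q p q' ≤ dot x q - envelope X Q p q}

/-- A feasible price schedule: bounded below, with the zero bundle priced at zero. -/
def Feasible (Q : Set (Fin N → ℝ)) (p : (Fin N → ℝ) → ℝ) : Prop :=
  BddBelow (p '' Q) ∧ p 0 = 0

/-- The seller's revenue `∫_X u_p dμ`. -/
def TR (xl xu : ℝ) (f : (Fin N → ℝ) → ℝ) (Q : Set (Fin N → ℝ))
    (p : (Fin N → ℝ) → ℝ) : ℝ :=
  (∑ n, (xu - xl)⁻¹ *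
    (xu * ∫ y in box xl xu,
            indirect Q p (Function.update y n xu) * f (Function.update y n xu)
     - xl * ∫ y in box xl xu,
            indirect Q p (Function.update y n xl) * f (Function.update y n xl)))
  - ∫ x in box xl xu, indirect Q p x * phi f x

/-- A price schedule is optimal if it is feasible and maximizes `∫_X u_p dμ` among
feasible price schedules. -/
def Optimal (xl xu : ℝ) (f : (Fin N → ℝ) → ℝ) (Q : Set (Fin N → ℝ))
    (p : (Fin N → ℝ) → ℝ) : Prop :=
  Feasible Q p ∧ ∀ p', Feasible Q p' → TR xl xu f Q p' ≤ TR xl xu f Q p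

/-- The maintained assumptions on the type density `f` on `X = [x̲,x̄]^N`. -/
def DensityHyp (xl xu : ℝ) (f : (Fin N → ℝ) → ℝ) : Prop :=
  (∀ x, 0 ≤ f x) ∧ (∫ x in box xl xu, f x = 1) ∧
  ContinuousOn f (box xl xu) ∧ ContDiffOn ℝ 1 f (interior (box xl xu)) ∧
  (∀ x ∈ frontier (box xl xu), 0 < f x) ∧
  (∃ M : ℝ, ∀ x ∈ interior (box xl xu), |phi f x| ≤ M)

/-- The maintained assumptions on the allocation space `𝒬`. -/
def QHyp (Q : Set (Fin N → ℝ)) : Prop :=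
  Convex ℝ Q ∧ IsCompact Q ∧ (∀ q ∈ Q, ∀ n, 0 ≤ q n) ∧
  (interior Q).Nonempty ∧ (0 : Fin N → ℝ) ∈ Q

/-- The measure with density `f` (the buyers' type distribution). -/
def muF (f : (Fin N → ℝ) → ℝ) : Measure (Fin N → ℝ) :=
  volume.withDensity fun x => ENNReal.ofReal (f x)

end Stmt14

namespace Stmt14

variable {N : ℕ}

/-- The allocation space `𝒬 = conv{0, e₁, …, e_N, k·𝟙}`. -/
def Qk (N : ℕ) (k : ℝ) : Set (Fin N → ℝ) :=
  convexHull ℝ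
    (insert (0 : Fin N → ℝ)
      (Set.range (fun n : Fin N => Pi.single n (1 : ℝ)) ∪ {fun _ => k}))
/-- The indicator vector of a set of coordinates. -/
def indVec (J : Finset (Fin N)) : Fin N → ℝ := fun m => if m ∈ J then 1 else 0

/-- The shear `x ↦ x + (1 - x n) • (indVec J - e_n)`, which fixes the `n`-th coordinate. -/
def shear (J : Finset (Fin N)) (n : Fin N) (x : Fin N → ℝ) : Fin N → ℝ :=
  x + (1 - x n) • indVec (J.erase n)

lemma mem_box_iff {a b : ℝ} {x : Fin N → ℝ} : x ∈ box a b ↔ ∀ n, a ≤ x n ∧ x n ≤ b := by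
  simp [box, Set.mem_Icc, Pi.le_def, forall_and]

lemma measurableSet_box {a b : ℝ} : MeasurableSet (box a b : Set (Fin N → ℝ)) :=
  measurableSet_Icc

lemma isCompact_box {a b : ℝ} : IsCompact (box a b : Set (Fin N → ℝ)) := isCompact_Icc

lemma convex_box {a b : ℝ} : Convex ℝ (box a b : Set (Fin N → ℝ)) := convex_Icc _ _

lemma box_eq_pi {a b : ℝ} : (box a b : Set (Fin N → ℝ)) = univ.pi fun _ => Icc a b :=
  (Set.pi_univ_Icc _ _).symm

lemma nonempty_interior_box : (interior (box 0 1 : Set (Fin N → ℝ))).Nonempty := by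
  rw [box_eq_pi, interior_pi_set finite_univ]
  exact ⟨fun _ => 1 / 2, by simp; norm_num⟩

lemma mem_frontier_box {x : Fin N → ℝ} (hx : x ∈ box 0 1) {n : Fin N} (hn : x n = 1) :
    x ∈ frontier (box 0 1 : Set (Fin N → ℝ)) := by
  refine ⟨subset_closure hx, fun h => ?_⟩
  rw [box_eq_pi, interior_pi_set finite_univ] at h
  have := h n (mem_univ n)
  simp [hn] at this

lemma update_mem_box {y : Fin N → ℝ} (hy : y ∈ box 0 1) (n : Fin N) :
    Function.update y n 1 ∈ (box 0 1 : Set (Fin N → ℝ)) := by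
  rw [mem_box_iff] at hy ⊢
  intro m
  by_cases h : m = n
  · subst h; simp
  · simpa [h] using hy m

/-- A neighbourhood of a point of the box meets the box in positive volume. -/
lemma volume_inter_box_pos {U : Set (Fin N → ℝ)} {z : Fin N → ℝ} (hU : U ∈ nhds z)
    (hz : z ∈ box 0 1) : 0 < volume (U ∩ box 0 1) := by
  have hcl : z ∈ closure (interior (box 0 1 : Set (Fin N → ℝ))) := by
    rw [convex_box.closure_interior_eq_closure_of_nonempty_interior nonempty_interior_box]
    exact subset_closure hz
  obtain ⟨w, hw, hw'⟩ := mem_closure_iff_nhds.1 hcl (interior U) (interior_mem_nhds.2 hU)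
  refine ((isOpen_interior.inter isOpen_interior).measure_pos volume ⟨w, hw, hw'⟩).trans_le ?_
  exact measure_mono (inter_subset_inter interior_subset interior_subset)

lemma measurePreserving_shear (J : Finset (Fin N)) (n : Fin N) :
    MeasurePreserving (shear J n) volume volume := by
  have hc : (LinearMap.proj n : Module.Dual ℝ (Fin N → ℝ)) (-indVec (J.erase n)) = 0 := by
    simp [indVec]
  have hL : MeasurePreserving (LinearMap.transvection (LinearMap.proj n : Module.Dual ℝ (Fin N → ℝ))
      (-indVec (J.erase n))) volume volume := by
    have hdet : LinearMap.det (LinearMap.transvection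
        (LinearMap.proj n : Module.Dual ℝ (Fin N → ℝ)) (-indVec (J.erase n))) = 1 := by
      rw [LinearMap.transvection.det, hc, add_zero]
    refine ⟨(LinearMap.continuous_of_finiteDimensional _).measurable, ?_⟩
    rw [Measure.map_linearMap_addHaar_eq_smul_addHaar _ (by rw [hdet]; exact one_ne_zero), hdet]
    simp
  have := (measurePreserving_add_right volume (indVec (J.erase n))).comp hL
  convert this using 1
  ext x m
  simp [shear, LinearMap.transvection]
  ring

lemma setIntegral_update_strip (n : Fin N) {δ : ℝ} (hδ0 : 0 ≤ δ) (hδ1 : δ ≤ 1)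
    (h : (Fin N → ℝ) → ℝ) :
    ∫ y in box 0 1 ∩ {y | 1 - δ ≤ y n}, h (Function.update y n 1) =
      δ * ∫ y in box 0 1, h (Function.update y n 1) := by
  obtain ⟨M, rfl⟩ : ∃ M, N = M + 1 := Nat.exists_eq_succ_of_ne_zero (Fin.pos n).ne'
  have key : ∀ a : ℝ, 0 ≤ a → a ≤ 1 →
      ∫ y in box 0 1 ∩ {y | a ≤ y n}, h (Function.update y n 1) =
        (1 - a) * ∫ y in (box 0 1 : Set (Fin M → ℝ)), h (n.insertNth 1 y) := by
    intro a ha ha1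
    have hp := (volume_preserving_piFinSuccAbove (fun _ : Fin (M + 1) => ℝ) n)
    have hset : box 0 1 ∩ {y : Fin (M + 1) → ℝ | a ≤ y n} =
        (MeasurableEquiv.piFinSuccAbove (fun _ => ℝ) n) ⁻¹' (Icc a 1 ×ˢ box 0 1) := by
      ext y
      simp only [mem_inter_iff, mem_box_iff, mem_ofPred_eq, mem_preimage, mem_prod,
        MeasurableEquiv.piFinSuccAbove_apply, Fin.insertNthEquiv_symm_apply, mem_Icc,
        Fin.forall_iff_succAbove n, Fin.removeNth]
      constructor
      · rintro ⟨⟨h1, h2⟩, h3⟩; exact ⟨⟨h3, h1.2⟩, h2⟩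
      · rintro ⟨⟨h1, h2⟩, h3⟩; exact ⟨⟨⟨ha.trans h1, h2⟩, h3⟩, h1⟩
    have hfun : ∀ y : Fin (M + 1) → ℝ, h (Function.update y n 1) =
        (fun z : ℝ × (Fin M → ℝ) => (fun _ : ℝ => (1 : ℝ)) z.1 * h (n.insertNth 1 z.2))
          (MeasurableEquiv.piFinSuccAbove (fun _ => ℝ) n y) := by
      intro y
      simp
    simp_rw [hfun]
    rw [hset, hp.setIntegral_preimage_emb (MeasurableEquiv.measurableEmbedding _)
      (fun z : ℝ × (Fin M → ℝ) => (fun _ : ℝ => (1 : ℝ)) z.1 * h (n.insertNth 1 z.2))]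
    rw [Measure.volume_eq_prod, setIntegral_prod_mul (fun _ : ℝ => (1 : ℝ))
      fun z : Fin M → ℝ => h (n.insertNth 1 z)]
    simp [ha1]
  have h0 := key 0 le_rfl zero_le_one
  have hbox : box 0 1 ∩ {y : Fin (M + 1) → ℝ | 0 ≤ y n} = box 0 1 :=
    inter_eq_left.2 fun y hy => (mem_box_iff.1 hy n).1
  rw [hbox, sub_zero, one_mul] at h0
  rw [key _ (by linarith) (by linarith), h0]
  ring

/-- A nonnegative function that increases along `indVec J` and is supported within `δ` of the upper
faces indexed by `J` has integral at most `δ` times its integral over those faces. -/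
lemma setIntegral_box_le {g : (Fin N → ℝ) → ℝ} (hg : Continuous g) (hg0 : ∀ x, 0 ≤ g x)
    {J : Finset (Fin N)} (hJ : J.Nonempty) {δ : ℝ} (hδ0 : 0 ≤ δ) (hδ1 : δ ≤ 1)
    (hmono : ∀ x : Fin N → ℝ, ∀ t : ℝ, 0 ≤ t → g x ≤ g (x + t • indVec J))
    (hsupp : ∀ x ∈ box 0 1, (∀ n ∈ J, x n ≤ 1 - δ) → g x = 0) :
    ∫ x in box 0 1, g x ≤ δ * ∑ n ∈ J, ∫ y in box 0 1, g (Function.update y n 1) := by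
  set F : Fin N → (Fin N → ℝ) → ℝ := fun n =>
    (box 0 1 ∩ {y | 1 - δ ≤ y n}).indicator fun y => g (Function.update y n 1) with hF
  have hcont : ∀ n : Fin N, Continuous fun y : Fin N → ℝ => g (Function.update y n 1) :=
    fun n => hg.comp (continuous_id.update n continuous_const)
  have hmeas : ∀ n : Fin N, MeasurableSet (box 0 1 ∩ {y : Fin N → ℝ | 1 - δ ≤ y n}) := fun n =>
    measurableSet_box.inter (measurableSet_le measurable_const (measurable_pi_apply n))
  have hFint : ∀ n, Integrable (F n) volume := fun n =>
    (((hcont n).continuousOn.integrableOn_compact isCompact_box).mono_set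
      inter_subset_left).integrable_indicator (hmeas n)
  have hF0 : ∀ n x, 0 ≤ F n x := fun n x => indicator_nonneg (fun y _ => hg0 _) x
  have hFT : ∀ n, Integrable (fun x => F n (shear J n x)) volume := fun n =>
    (measurePreserving_shear J n).integrable_comp_of_integrable (hFint n)
  have hFTeq : ∀ n, ∫ x, F n (shear J n x) = δ * ∫ y in box 0 1, g (Function.update y n 1) := by
    intro n
    have hT := measurePreserving_shear J n
    rw [← setIntegral_update_strip n hδ0 hδ1 g, ← integral_indicator (hmeas n),
      ← integral_map (f := F n) hT.measurable.aemeasurable, hT.map_eq]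
    rw [hT.map_eq]
    exact (hFint n).aestronglyMeasurable
  rw [Finset.mul_sum, ← Finset.sum_congr rfl fun n _ => hFTeq n,
    ← integral_finsetSum _ fun n _ => hFT n, ← integral_indicator measurableSet_box]
  refine integral_mono ((hg.continuousOn.integrableOn_compact isCompact_box).integrable_indicator
    measurableSet_box) (integrable_finsetSum _ fun n _ => hFT n) fun x => ?_
  by_cases hx : x ∈ box 0 1
  swap
  · simpa [hx] using Finset.sum_nonneg fun n _ => hF0 n _
  rw [indicator_of_mem hx]
  by_cases hs : ∀ n ∈ J, x n ≤ 1 - δ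
  · rw [hsupp x hx hs]
    exact Finset.sum_nonneg fun n _ => hF0 n _
  push Not at hs
  obtain ⟨l, hlJ, hl⟩ := hs
  obtain ⟨n, hnJ, hn⟩ := Finset.exists_max_image J x hJ
  have hxn : 1 - δ ≤ x n := hl.le.trans (hn l hlJ)
  have hxb := mem_box_iff.1 hx
  have hsn : shear J n x n = x n := by simp [shear, indVec]
  have hmem : shear J n x ∈ box 0 1 ∩ {y : Fin N → ℝ | 1 - δ ≤ y n} := by
    refine ⟨mem_box_iff.2 fun m => ?_, by simpa [hsn] using hxn⟩
    have h1 := hxb m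
    have h2 := hxb n
    by_cases hm : m ∈ J.erase n
    · have h3 := hn m (Finset.mem_of_mem_erase hm)
      simp only [shear, indVec, Pi.add_apply, Pi.smul_apply, hm, if_true, smul_eq_mul]
      constructor <;> linarith
    · simpa [shear, indVec, hm] using h1
  have hup : Function.update (shear J n x) n 1 = x + (1 - x n) • indVec J := by
    ext m
    by_cases hm : m = n
    · subst hm; simp [indVec, hnJ]
    · simp [hm, shear, indVec]
  calc g x ≤ g (x + (1 - x n) • indVec J) := hmono x _ (by linarith [(hxb n).2])
    _ = F n (shear J n x) := by rw [hF]; simp only [indicator_of_mem hmem, hup]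
    _ ≤ ∑ n ∈ J, F n (shear J n x) :=
      Finset.single_le_sum (f := fun n => F n (shear J n x)) (fun n _ => hF0 n _) hnJ

lemma dot_add_smul (x v q : Fin N → ℝ) (t : ℝ) : dot (x + t • v) q = dot x q + t * dot v q := by
  change (x + t • v) ⬝ᵥ q = x ⬝ᵥ q + t * (v ⬝ᵥ q)
  rw [add_dotProduct, smul_dotProduct, smul_eq_mul]

lemma continuous_dot (q : Fin N → ℝ) : Continuous fun x => dot x q := by
  unfold dot
  fun_prop

lemma dot_le_norm_mul (x : Fin N → ℝ) {q : Fin N → ℝ} {C : ℝ} (hq : ∑ n, |q n| ≤ C) :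
    dot x q ≤ ‖x‖ * C := by
  calc dot x q ≤ ∑ n, ‖x‖ * |q n| := Finset.sum_le_sum fun n _ => by
        refine (le_abs_self _).trans ?_
        rw [abs_mul]
        exact mul_le_mul_of_nonneg_right (norm_le_pi_norm x n) (abs_nonneg _)
    _ = ‖x‖ * ∑ n, |q n| := (Finset.mul_sum _ _ _).symm
    _ ≤ ‖x‖ * C := mul_le_mul_of_nonneg_left hq (norm_nonneg _)

section Utility

variable {Q : Set (Fin N → ℝ)} {p : (Fin N → ℝ) → ℝ} {C : ℝ}

lemma bddAbove_surplus (hC : ∀ q ∈ Q, ∑ n, |q n| ≤ C) (hp : BddBelow (p '' Q))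
    (x : Fin N → ℝ) : BddAbove ((fun q => dot x q - p q) '' Q) := by
  obtain ⟨b, hb⟩ := hp
  refine ⟨‖x‖ * C - b, ?_⟩
  rintro _ ⟨q, hq, rfl⟩
  have h1 := dot_le_norm_mul x (hC q hq)
  have h2 := hb (mem_image_of_mem p hq)
  dsimp only
  linarith

lemma surplus_le_indirect (hC : ∀ q ∈ Q, ∑ n, |q n| ≤ C) (hp : BddBelow (p '' Q))
    (x : Fin N → ℝ) {q : Fin N → ℝ} (hq : q ∈ Q) : dot x q - p q ≤ indirect Q p x :=
  le_csSup (bddAbove_surplus hC hp x) (mem_image_of_mem (fun q => dot x q - p q) hq)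

/-- Moving in direction `v` raises the indirect utility at a rate bounded by the support function
of `Q` at `v`. -/
lemma indirect_add_smul_le (hC : ∀ q ∈ Q, ∑ n, |q n| ≤ C) (hp : BddBelow (p '' Q))
    (hQ : Q.Nonempty) (x v : Fin N → ℝ) {t s : ℝ} (ht : 0 ≤ t) (hs : ∀ q ∈ Q, dot v q ≤ s) :
    indirect Q p (x + t • v) ≤ indirect Q p x + t * s := by
  refine csSup_le (hQ.image _) ?_
  rintro _ ⟨q, hq, rfl⟩
  have h1 := surplus_le_indirect hC hp x hq
  have h2 := mul_le_mul_of_nonneg_left (hs q hq) ht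
  simp only [dot_add_smul]
  linarith

lemma continuous_indirect (hC : ∀ q ∈ Q, ∑ n, |q n| ≤ C) (hp : BddBelow (p '' Q))
    (hQ : Q.Nonempty) : Continuous (indirect Q p) := by
  refine (LipschitzWith.of_le_add_mul' C fun x y => ?_).continuous
  have h := indirect_add_smul_le hC hp hQ y (x - y) zero_le_one
    fun q hq => dot_le_norm_mul (x - y) (hC q hq)
  rw [one_smul, add_sub_cancel] at h
  rw [dist_eq_norm]
  linarith

lemma surplus_envelope_le_indirect (hC : ∀ q ∈ Q, ∑ n, |q n| ≤ C) (hp : BddBelow (p '' Q))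
    (hQ : Q.Nonempty) {X : Set (Fin N → ℝ)} (hX : IsCompact X) {x : Fin N → ℝ} (hx : x ∈ X)
    (q : Fin N → ℝ) : dot x q - envelope X Q p q ≤ indirect Q p x := by
  have hb : BddAbove ((fun x => dot x q - indirect Q p x) '' X) :=
    hX.bddAbove_image ((continuous_dot q).sub (continuous_indirect hC hp hQ)).continuousOn
  have := le_csSup hb (mem_image_of_mem (fun x => dot x q - indirect Q p x) hx)
  unfold envelope
  linarith

lemma exists_indirect_eq_surplus_envelope (hC : ∀ q ∈ Q, ∑ n, |q n| ≤ C)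
    (hp : BddBelow (p '' Q)) (hQ : Q.Nonempty) {X : Set (Fin N → ℝ)} (hX : IsCompact X)
    (hX' : X.Nonempty) (q : Fin N → ℝ) :
    ∃ x ∈ X, indirect Q p x = dot x q - envelope X Q p q := by
  have hc : ContinuousOn (fun x => dot x q - indirect Q p x) X :=
    ((continuous_dot q).sub (continuous_indirect hC hp hQ)).continuousOn
  obtain ⟨x, hx, h⟩ := (hX.image_of_continuousOn hc).sSup_mem (hX'.image _)
  exact ⟨x, hx, by unfold envelope; dsimp only at h; linarith⟩

lemma envelope_le_price (hC : ∀ q ∈ Q, ∑ n, |q n| ≤ C) (hp : BddBelow (p '' Q))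
    {X : Set (Fin N → ℝ)} (hX' : X.Nonempty) {q : Fin N → ℝ} (hq : q ∈ Q) :
    envelope X Q p q ≤ p q := by
  refine csSup_le (hX'.image _) ?_
  rintro _ ⟨x, -, rfl⟩
  have := surplus_le_indirect hC hp x hq
  dsimp only
  linarith

lemma mem_demandSet_of_indirect_eq (hC : ∀ q ∈ Q, ∑ n, |q n| ≤ C) (hp : BddBelow (p '' Q))
    (hQ : Q.Nonempty) {X : Set (Fin N → ℝ)} (hX : IsCompact X) {x q : Fin N → ℝ} (hx : x ∈ X)
    (h : indirect Q p x = dot x q - envelope X Q p q) : x ∈ demandSet X Q p q :=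
  ⟨hx, fun q' _ => h ▸ surplus_envelope_le_indirect hC hp hQ hX hx q'⟩

/-- Repricing the single bundle `q` at `c ≤ p q` replaces the indirect utility by its maximum with
the surplus from `q`. -/
lemma indirect_update_price (hC : ∀ q ∈ Q, ∑ n, |q n| ≤ C) (hp : BddBelow (p '' Q))
    {q : Fin N → ℝ} (hq : q ∈ Q) {c : ℝ} (hc : c ≤ p q) (x : Fin N → ℝ) :
    indirect Q (Function.update p q c) x = max (indirect Q p x) (dot x q - c) := by
  have hle : ∀ q' ∈ Q, dot x q' - Function.update p q c q' ≤
      max (indirect Q p x) (dot x q - c) := by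
    intro q' hq'
    by_cases h : q' = q
    · subst h
      simp
    · rw [Function.update_of_ne h]
      exact (surplus_le_indirect hC hp x hq').trans (le_max_left _ _)
  have hb : BddAbove ((fun q' => dot x q' - Function.update p q c q') '' Q) := by
    refine ⟨max (indirect Q p x) (dot x q - c), ?_⟩
    rintro _ ⟨q', hq', rfl⟩
    exact hle q' hq'
  refine le_antisymm (csSup_le (Set.Nonempty.image _ ⟨q, hq⟩) ?_) (max_le ?_ ?_)
  · rintro _ ⟨q', hq', rfl⟩
    exact hle q' hq'
  · refine csSup_le (Set.Nonempty.image _ ⟨q, hq⟩) ?_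
    rintro _ ⟨q', hq', rfl⟩
    refine le_trans ?_ (le_csSup hb (mem_image_of_mem _ hq'))
    by_cases h : q' = q
    · subst h
      simpa using sub_le_sub_left hc (dot x q')
    · simp [Function.update_of_ne h]
  · refine le_trans ?_ (le_csSup hb (mem_image_of_mem _ hq))
    simp

lemma feasible_update_price (hp : Feasible Q p) {q : Fin N → ℝ} (hq0 : q ≠ 0) (c : ℝ) :
    Feasible Q (Function.update p q c) := by
  obtain ⟨⟨b, hb⟩, h0⟩ := hp
  refine ⟨⟨min b c, ?_⟩, by rw [Function.update_of_ne hq0.symm, h0]⟩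
  rintro _ ⟨q', hq', rfl⟩
  by_cases h : q' = q
  · subst h
    simp
  · rw [Function.update_of_ne h]
    exact (min_le_left _ _).trans (hb (mem_image_of_mem p hq'))

end Utility

lemma restrict_interior_box :
    (volume : Measure (Fin N → ℝ)).restrict (box 0 1) = volume.restrict (interior (box 0 1)) :=
  (Measure.restrict_congr_set
    (interior_ae_eq_of_null_frontier (convex_box.addHaar_frontier volume))).symm

section Density

variable {f : (Fin N → ℝ) → ℝ}

lemma DensityHyp.continuousOn_phi (hf : DensityHyp 0 1 f) :
    ContinuousOn (phi f) (interior (box 0 1)) := by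
  have hfd := hf.2.2.2.1.continuousOn_fderiv_of_isOpen isOpen_interior le_rfl
  refine ContinuousOn.add (continuousOn_finsetSum _ fun n _ => ?_)
    (continuousOn_const.mul (hf.2.2.1.mono interior_subset))
  exact (continuous_apply n).continuousOn.mul (hfd.clm_apply continuousOn_const)

lemma DensityHyp.integrableOn_mul_phi (hf : DensityHyp 0 1 f) {g : (Fin N → ℝ) → ℝ}
    (hg : Continuous g) : IntegrableOn (fun x => g x * phi f x) (box 0 1) := by
  obtain ⟨M, hM⟩ := hf.2.2.2.2.2
  have hgi : IntegrableOn g (box 0 1) := hg.continuousOn.integrableOn_compact isCompact_box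
  rw [IntegrableOn, restrict_interior_box] at hgi ⊢
  refine hgi.mul_bdd (c := M)
    (hf.continuousOn_phi.aestronglyMeasurable isOpen_interior.measurableSet) ?_
  exact (ae_restrict_mem isOpen_interior.measurableSet).mono hM

lemma DensityHyp.integrableOn_face (hf : DensityHyp 0 1 f) {g : (Fin N → ℝ) → ℝ}
    (hg : Continuous g) (n : Fin N) :
    IntegrableOn (fun y => g (Function.update y n 1) * f (Function.update y n 1)) (box 0 1) := by
  have hu : Continuous fun y : Fin N → ℝ => Function.update y n 1 :=
    continuous_id.update n continuous_const
  exact ((hg.comp hu).continuousOn.mul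
    (hf.2.2.1.comp hu.continuousOn fun y hy => update_mem_box hy n)).integrableOn_compact
      isCompact_box

lemma DensityHyp.TR_sub_TR (hf : DensityHyp 0 1 f) {Q : Set (Fin N → ℝ)}
    {p p' : (Fin N → ℝ) → ℝ} {g : (Fin N → ℝ) → ℝ} (hu : Continuous (indirect Q p))
    (hg : Continuous g) (hgu : ∀ x, indirect Q p' x = indirect Q p x + g x) :
    TR 0 1 f Q p' - TR 0 1 f Q p =
      (∑ n, ∫ y in box 0 1, g (Function.update y n 1) * f (Function.update y n 1)) -
        ∫ x in box 0 1, g x * phi f x := by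
  simp only [TR, hgu, add_mul, sub_zero, inv_one, one_mul, zero_mul]
  rw [integral_add (hf.integrableOn_mul_phi hu) (hf.integrableOn_mul_phi hg)]
  simp_rw [fun n => integral_add (hf.integrableOn_face hu n) (hf.integrableOn_face hg n)]
  rw [Finset.sum_add_distrib]
  ring

lemma DensityHyp.exists_face_lower_bound (hf : DensityHyp 0 1 f) :
    ∃ c > 0, ∀ n : Fin N, ∀ y ∈ box 0 1, c ≤ f (Function.update y n 1) := by
  have hK : IsCompact (frontier (box 0 1 : Set (Fin N → ℝ))) :=
    isCompact_box.of_isClosed_subset isClosed_frontier isCompact_box.isClosed.frontier_subset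
  obtain ⟨c, hc, h⟩ := hK.exists_forall_le' (hf.2.2.1.mono isCompact_box.isClosed.frontier_subset)
    (a := 0) hf.2.2.2.2.1
  exact ⟨c, hc, fun n y hy => h _ (mem_frontier_box (update_mem_box hy n) (n := n) (by simp))⟩

lemma DensityHyp.muF_ne_zero (hf : DensityHyp 0 1 f) {D U : Set (Fin N → ℝ)} {z : Fin N → ℝ}
    (hz : z ∈ box 0 1) (hfz : 0 < f z) (hU : U ∈ nhds z) (hD : U ∩ box 0 1 ⊆ D) :
    muF f D ≠ 0 := by
  have hev : ∀ᶠ x in nhdsWithin z (box 0 1), f z / 2 < f x :=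
    (hf.2.2.1 z hz).eventually (lt_mem_nhds (half_lt_self hfz))
  rw [eventually_nhdsWithin_iff] at hev
  obtain ⟨V, hV, hVo, hzV⟩ := mem_nhds_iff.1 (Filter.inter_mem hU hev)
  have hpos := volume_inter_box_pos (hVo.mem_nhds hzV) hz
  refine (lt_of_lt_of_le ?_ ((withDensity_apply_le _ (V ∩ box 0 1)).trans
    (measure_mono fun x hx => hD ⟨(hV hx.1).1, hx.2⟩))).ne'
  calc (0 : ENNReal) < ENNReal.ofReal (f z / 2) * volume (V ∩ box 0 1) :=
        ENNReal.mul_pos (by simpa using hfz) hpos.ne'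
    _ = ∫⁻ _ in V ∩ box 0 1, ENNReal.ofReal (f z / 2) := (setLIntegral_const _ _).symm
    _ ≤ ∫⁻ x in V ∩ box 0 1, ENNReal.ofReal (f x) :=
        setLIntegral_mono' (hVo.measurableSet.inter measurableSet_box) fun x hx =>
          ENNReal.ofReal_le_ofReal ((hV hx.1).2 hx.2).le

end Density

lemma setIntegral_face_pos {g : (Fin N → ℝ) → ℝ} (hg : Continuous g) (hg0 : ∀ x, 0 ≤ g x)
    {x : Fin N → ℝ} (hx : x ∈ box 0 1) {n : Fin N} (hn : x n = 1) (hgx : 0 < g x) :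
    0 < ∫ y in box 0 1, g (Function.update y n 1) := by
  have hc : Continuous fun y : Fin N → ℝ => g (Function.update y n 1) :=
    hg.comp (continuous_id.update n continuous_const)
  rw [setIntegral_pos_iff_support_of_nonneg_ae (ae_of_all _ fun y => hg0 _)
    (hc.continuousOn.integrableOn_compact isCompact_box)]
  refine volume_inter_box_pos (z := x) (hc.isOpen_support.mem_nhds ?_) hx
  rw [Function.mem_support, ← hn, Function.update_eq_self]
  exact hgx.ne'

/-- If a nonzero bundle `q` maximizes `dot v` over `Q` for every `v` near `indVec J`, then `q` is
pooling at every optimal price schedule. -/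
theorem pooling_of_forall_near_indVec {f : (Fin N → ℝ) → ℝ} (hf : DensityHyp 0 1 f)
    {Q : Set (Fin N → ℝ)} {C : ℝ} (hC : ∀ q ∈ Q, ∑ n, |q n| ≤ C)
    {p : (Fin N → ℝ) → ℝ} (hopt : Optimal 0 1 f Q p) {q : Fin N → ℝ} (hq : q ∈ Q) (hq0 : q ≠ 0)
    {J : Finset (Fin N)} (hJ : J.Nonempty) {r : ℝ} (hr : 0 < r)
    (hK : ∀ v : Fin N → ℝ, (∀ n, |v n - indVec J n| ≤ r) → ∀ q' ∈ Q, dot v q' ≤ dot v q) :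
    muF f (demandSet (box 0 1) Q p q) ≠ 0 := by
  intro hnull
  have hp := hopt.1.1
  have hQ : Q.Nonempty := ⟨q, hq⟩
  have hX : IsCompact (box 0 1 : Set (Fin N → ℝ)) := isCompact_box
  have hX' : (box 0 1 : Set (Fin N → ℝ)).Nonempty := nonempty_interior_box.mono interior_subset
  have hu := continuous_indirect hC hp hQ
  set P := envelope (box 0 1) Q p q with hP
  set w : (Fin N → ℝ) → ℝ := fun x => dot x q - P - indirect Q p x with hw
  have hwc : Continuous w := ((continuous_dot q).sub continuous_const).sub hu
  have hw_le : ∀ x ∈ box 0 1, w x ≤ 0 := fun x hx =>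
    sub_nonpos.2 (surplus_envelope_le_indirect hC hp hQ hX hx q)
  have hw_mono : ∀ x v : Fin N → ℝ, (∀ n, |v n - indVec J n| ≤ r) → ∀ t : ℝ, 0 ≤ t →
      w x ≤ w (x + t • v) := by
    intro x v hv t ht
    have h := indirect_add_smul_le hC hp hQ x v ht (hK v hv)
    simp only [hw, dot_add_smul]
    linarith
  -- Types indifferent to `q` lie on the upper faces indexed by `J`.
  have hface : ∀ x ∈ box 0 1, w x = 0 → ∃ n ∈ J, x n = 1 := by
    intro x hx hx0
    by_contra! hne
    have hxb := mem_box_iff.1 hx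
    obtain ⟨m, hmJ, hm⟩ := Finset.exists_max_image J x hJ
    have ht : 0 < 1 - x m := sub_pos.2 (lt_of_le_of_ne (hxb m).2 (hne m hmJ))
    set t := 1 - x m with ht_def
    set z := x + t • indVec J with hz
    have hzb : z ∈ box 0 1 := by
      refine mem_box_iff.2 fun n => ?_
      have h1 := hxb n
      by_cases hn : n ∈ J
      · have h2 := hm n hn
        simp only [hz, indVec, Pi.add_apply, Pi.smul_apply, hn, if_true, smul_eq_mul]
        constructor <;> linarith
      · simpa [hz, indVec, hn] using h1
    have hzm : z m = 1 := by simp [hz, indVec, hmJ, ht_def]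
    refine hf.muF_ne_zero hzb (hf.2.2.2.2.1 z (mem_frontier_box hzb hzm))
      (Metric.closedBall_mem_nhds z (mul_pos ht hr)) (fun y hy => ?_) hnull
    have hyv : y = x + t • (t⁻¹ • (y - x)) := by
      rw [smul_inv_smul₀ ht.ne', add_sub_cancel]
    have hv : ∀ n, |(t⁻¹ • (y - x)) n - indVec J n| ≤ r := by
      intro n
      have h1 : |y n - z n| ≤ t * r := by
        rw [← Real.dist_eq]
        exact (dist_le_pi_dist y z n).trans hy.1
      have h2 : (t⁻¹ • (y - x)) n - indVec J n = t⁻¹ * (y n - z n) := by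
        simp only [hz, Pi.smul_apply, Pi.sub_apply, Pi.add_apply, smul_eq_mul]
        field_simp
        ring
      rw [h2, abs_mul, abs_of_pos (inv_pos.2 ht), inv_mul_le_iff₀ ht]
      exact h1
    have h3 := hw_mono x _ hv t ht.le
    rw [← hyv, hx0] at h3
    refine mem_demandSet_of_indirect_eq hC hp hQ hX hy.2 ?_
    have h4 := le_antisymm (hw_le y hy.2) h3
    simp only [hw] at h4
    linarith
  obtain ⟨M, hM⟩ := hf.2.2.2.2.2
  obtain ⟨c, hc, hcf⟩ := hf.exists_face_lower_bound
  obtain ⟨δ, hδ0, hδ1, hδM⟩ : ∃ δ : ℝ, 0 < δ ∧ δ ≤ 1 ∧ |M| * δ < c := by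
    have h1 : 0 < |M| + 1 := by positivity
    refine ⟨min 1 (c / (|M| + 1)), lt_min one_pos (div_pos hc h1), min_le_left _ _, ?_⟩
    have h2 : (|M| + 1) * min 1 (c / (|M| + 1)) ≤ c :=
      (mul_le_mul_of_nonneg_left (min_le_right _ _) h1.le).trans_eq (mul_div_cancel₀ _ h1.ne')
    have h3 : 0 < min 1 (c / (|M| + 1)) := lt_min one_pos (div_pos hc h1)
    linarith
  -- Away from those faces the surplus from `q` is bounded away from the indirect utility.
  obtain ⟨ε, hε, hwε⟩ : ∃ ε > 0, ∀ x ∈ box 0 1, (∀ n ∈ J, x n ≤ 1 - δ) → w x ≤ -ε := by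
    have hcl : IsClosed {x : Fin N → ℝ | ∀ n ∈ J, x n ≤ 1 - δ} := by
      simp only [Set.ofPred_forall]
      exact isClosed_biInter fun n _ => isClosed_le (continuous_apply n) continuous_const
    obtain ⟨ε, hε, h⟩ := (hX.inter_right hcl).exists_forall_le' (f := fun x => -w x) (a := 0)
      hwc.neg.continuousOn (by
        rintro x ⟨hx, hxJ⟩
        refine neg_pos.2 (lt_of_le_of_ne (hw_le x hx) fun h0 => ?_)
        obtain ⟨n, hn, hn1⟩ := hface x hx h0
        have := hxJ n hn
        linarith)
    exact ⟨ε, hε, fun x hx hxJ => by linarith [h x ⟨hx, hxJ⟩]⟩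
  set g : (Fin N → ℝ) → ℝ := fun x => max 0 (w x + ε) with hg
  have hgc : Continuous g := continuous_const.max (hwc.add continuous_const)
  have hg0 : ∀ x, 0 ≤ g x := fun x => le_max_left _ _
  have hI := setIntegral_box_le hgc hg0 hJ hδ0.le hδ1
    (fun x t ht => max_le_max le_rfl (add_le_add_left
      (hw_mono x (indVec J) (fun n => by simpa using hr.le) t ht) ε))
    (fun x hx hxJ => max_eq_left (by linarith [hwε x hx hxJ]))
  set S := ∑ n ∈ J, ∫ y in box 0 1, g (Function.update y n 1) with hS
  have hSpos : 0 < S := by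
    obtain ⟨x, hx, hxe⟩ := exists_indirect_eq_surplus_envelope hC hp hQ hX hX' q
    have hx0 : w x = 0 := by simp [hw, hxe, hP]
    obtain ⟨n, hnJ, hn⟩ := hface x hx hx0
    have hgx : 0 < g x := by simp [hg, hx0, hε]
    exact Finset.sum_pos' (fun n _ => integral_nonneg fun y => hg0 _)
      ⟨n, hnJ, setIntegral_face_pos hgc hg0 hx hn hgx⟩
  have hrev := hopt.2 _ (feasible_update_price hopt.1 hq0 (P - ε))
  have hdiff := hf.TR_sub_TR (p' := Function.update p q (P - ε)) hu hgc fun x => by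
    rw [indirect_update_price hC hp hq (by linarith [envelope_le_price hC hp hX' hq]),
      ← max_add_add_left]
    simp only [hw]
    congr 1 <;> ring
  have hgain : c * S ≤
      ∑ n, ∫ y in box 0 1, g (Function.update y n 1) * f (Function.update y n 1) := by
    rw [hS, Finset.mul_sum]
    refine (Finset.sum_le_sum fun n _ => ?_).trans (Finset.sum_le_sum_of_subset_of_nonneg
      (Finset.subset_univ J) fun n _ _ => integral_nonneg fun y => mul_nonneg (hg0 _) (hf.1 _))
    rw [← integral_const_mul]
    refine setIntegral_mono_on ?_ (hf.integrableOn_face hgc n) measurableSet_box fun y hy => ?_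
    · exact ((hgc.comp (continuous_id.update n continuous_const)).continuousOn.integrableOn_compact
        isCompact_box).const_mul c
    · rw [mul_comm]
      exact mul_le_mul_of_nonneg_left (hcf n y hy) (hg0 _)
  have hloss : ∫ x in box 0 1, g x * phi f x ≤ |M| * ∫ x in box 0 1, g x := by
    rw [← integral_const_mul]
    refine integral_mono_ae (hf.integrableOn_mul_phi hgc)
      ((hgc.continuousOn.integrableOn_compact isCompact_box).const_mul _) ?_
    rw [restrict_interior_box]
    refine (ae_restrict_mem isOpen_interior.measurableSet).mono fun x hx => ?_
    dsimp only
    rw [mul_comm]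
    exact mul_le_mul_of_nonneg_right
      ((le_abs_self _).trans ((hM x hx).trans (le_abs_self M))) (hg0 x)
  have h1 := mul_le_mul_of_nonneg_left hI (abs_nonneg M)
  have h2 := mul_lt_mul_of_pos_right hδM hSpos
  rw [← mul_assoc] at h1
  linarith

/-- A linear inequality on the allocation space follows from its vertices. -/
lemma dot_le_of_mem_Qk {k s : ℝ} {v q' : Fin N → ℝ} (h0 : 0 ≤ s) (h1 : ∀ n, v n ≤ s)
    (hk : k * ∑ n, v n ≤ s) (hq' : q' ∈ Qk N k) : dot v q' ≤ s := by
  have hconv : Convex ℝ {q' : Fin N → ℝ | v ⬝ᵥ q' ≤ s} :=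
    convex_halfSpace_le ⟨dotProduct_add v, fun c x => dotProduct_smul c v x⟩ s
  refine convexHull_min ?_ hconv hq'
  rintro x (rfl | ⟨n, rfl⟩ | rfl)
  · simpa using h0
  · simpa using h1 n
  · simpa [dotProduct, Finset.mul_sum, mul_comm] using hk

lemma exists_sum_abs_le_of_mem_Qk (k : ℝ) : ∃ C, ∀ q ∈ Qk N k, ∑ n, |q n| ≤ C := by
  have hfin : (insert (0 : Fin N → ℝ)
      (Set.range (fun n : Fin N => Pi.single n (1 : ℝ)) ∪ {fun _ => k})).Finite :=
    ((Set.finite_range _).union (Set.finite_singleton _)).insert _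
  obtain ⟨C, hC⟩ := hfin.isCompact_convexHull (𝕜 := ℝ) |>.bddAbove_image
    (f := fun q : Fin N → ℝ => ∑ n, |q n|) (by fun_prop)
  exact ⟨C, fun q hq => hC (mem_image_of_mem _ hq)⟩


/-- Corollary 9: with `X = [0,1]^N` and
`𝒬 = conv{0, e₁, …, e_N, k·𝟙}`, at any optimal feasible price schedule:
(1) if `1/N ≤ k < 1` then every `e_n` is pooling;
(2) if `k > 1/N` then `k·𝟙` is pooling. -/
theorem pooling_in_substitute_complement_space
    (hN : 0 < N) (k : ℝ) (hk : 0 < k)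
    (f : (Fin N → ℝ) → ℝ) (hf : DensityHyp 0 1 f)
    (p : (Fin N → ℝ) → ℝ) (hopt : Optimal 0 1 f (Qk N k) p) :
    ((1 / (N : ℝ) ≤ k ∧ k < 1) →
      ∀ n : Fin N, muF f (demandSet (box 0 1) (Qk N k) p (Pi.single n 1)) ≠ 0) ∧
    (1 / (N : ℝ) < k →
      muF f (demandSet (box 0 1) (Qk N k) p (fun _ => k)) ≠ 0) := by
  obtain ⟨C, hC⟩ := exists_sum_abs_le_of_mem_Qk (N := N) k
  have hNpos : (0 : ℝ) < N := Nat.cast_pos.2 hN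
  refine ⟨fun ⟨_, hk1⟩ n => ?_, fun hkN => ?_⟩
  · have hden : 0 < 1 + k * N := by positivity
    have hr : 0 < min (1 / 2) ((1 - k) / (1 + k * N)) :=
      lt_min (by norm_num) (div_pos (by linarith) hden)
    refine pooling_of_forall_near_indVec hf hC hopt (J := {n})
      (r := min (1 / 2) ((1 - k) / (1 + k * N)))
      (subset_convexHull ℝ _ (Or.inr (Or.inl ⟨n, rfl⟩))) ?_ (Finset.singleton_nonempty n) hr ?_
    · intro h
      simpa using congrFun h n
    intro v hv q' hq'
    set r := min (1 / 2) ((1 - k) / (1 + k * N))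
    have hr1 : r ≤ 1 / 2 := min_le_left _ _
    have hr2 : r * (1 + k * N) ≤ 1 - k := (le_div_iff₀ hden).1 (min_le_right _ _)
    have hvn : 1 - r ≤ v n := by
      have := abs_le.1 (hv n)
      simp only [indVec, Finset.mem_singleton, if_true] at this
      linarith
    have hdot : dot v (Pi.single n 1) = v n := by simp [dot, Pi.single_apply]
    have hsum : ∑ m, v m ≤ 1 + N * r := by
      calc ∑ m, v m ≤ ∑ m, (indVec {n} m + r) :=
            Finset.sum_le_sum fun m _ => by linarith [(abs_le.1 (hv m)).2]
        _ = 1 + N * r := by simp [Finset.sum_add_distrib, indVec]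
    rw [hdot]
    refine dot_le_of_mem_Qk (by linarith) (fun m => ?_) ?_ hq'
    · by_cases hm : m = n
      · rw [hm]
      · have := (abs_le.1 (hv m)).2
        simp only [indVec, Finset.mem_singleton, hm, if_false] at this
        linarith
    · have := mul_le_mul_of_nonneg_left hsum hk.le
      linarith
  · have hkN' : 1 < k * N := by rwa [div_lt_iff₀ hNpos] at hkN
    have hden : 0 < k * N + 1 := by linarith
    refine pooling_of_forall_near_indVec hf hC hopt (J := Finset.univ)
      (r := (k * N - 1) / (k * N + 1)) (subset_convexHull ℝ _ (Or.inr (Or.inr rfl))) ?_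
      ⟨⟨0, hN⟩, Finset.mem_univ _⟩ (div_pos (by linarith) hden) ?_
    · intro h
      exact hk.ne' (congrFun h ⟨0, hN⟩)
    intro v hv q' hq'
    set r := (k * N - 1) / (k * N + 1)
    have hr : r * (k * N + 1) = k * N - 1 := div_mul_cancel₀ _ hden.ne'
    have hv' : ∀ m, 1 - r ≤ v m ∧ v m ≤ 1 + r := fun m => by
      have := abs_le.1 (hv m)
      simp only [indVec, Finset.mem_univ, if_true] at this
      constructor <;> linarith
    have hr0 : 0 ≤ r := div_nonneg (by linarith) hden.le
    have hdot : dot v (fun _ => k) = k * ∑ m, v m := by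
      simp [dot, Finset.mul_sum, mul_comm]
    have hsum : N * (1 - r) ≤ ∑ m, v m := by
      simpa using Finset.card_nsmul_le_sum Finset.univ v (1 - r) fun m _ => (hv' m).1
    have h1 : 1 + r ≤ k * ∑ m, v m := by
      have := mul_le_mul_of_nonneg_left hsum hk.le
      linarith
    rw [hdot]
    exact dot_le_of_mem_Qk (by linarith) (fun m => (hv' m).2.trans h1) le_rfl hq'

end Stmt14
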